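/- Let q = 2^{2s} with s ≥ 1, let w ∈ F_q satisfy w² = w + 1, and let f_w(x) = x^{q^4} + w x^{q³} + w x^q + x ∈ F_{q^5}[x], with U_{f_w} = { (x, f_w(x)) : x ∈ F_{q^5} } ⊆ F_{q^5}². For an invertible matrix A = ((a, b), (c, d)) over F_{q^5} and a field automorphism σ of F_{q^5}, the semilinear map (x, y) ↦ A·(σ(x), σ(y)) maps U_{f_w} onto U_{f_w} if and only if c = 0, d = a with a ∈ F_q^*, b satisfies b^{q²} + (w+1)·b^q + b = 0, and σ is an even power of the Frobenius x ↦ x², i.e., σ(x) = x^{4^j} for some j. In particular, the stabilizer of U_{f_w} in ΓL(2, q^5) is isomorphic to (E_{q²} × C_{q−1}) ⋊ C_{5s}, where E_{q²} is elementary abelian of order q². -/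

import Mathlib

/-- The stabilizer of a subset `U ⊆ K × K` inside `ΓL(2, K)`, realised as the subgroup
of additive automorphisms of `K × K` which are semilinear with respect to some field
automorphism of `K` and which map `U` onto itself. -/
def semilinearStab (K : Type*) [Field K] (U : Set (K × K)) :
    Subgroup (Multiplicative (AddAut (K × K))) where
  carrier := {g | (∃ σ : K ≃+* K, ∀ (c : K) (v : K × K), g.toAdd (c • v) = σ c • g.toAdd v) ∧
    ∀ u : K × K, u ∈ U ↔ g.toAdd u ∈ U}
  one_mem' := ⟨⟨RingEquiv.refl K, fun c v => rfl⟩, fun u => Iff.rfl⟩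
  mul_mem' := by
    rintro g₁ g₂ ⟨⟨σ₁, h₁⟩, hU₁⟩ ⟨⟨σ₂, h₂⟩, hU₂⟩
    refine ⟨⟨σ₂.trans σ₁, fun c v => ?_⟩, fun u => ?_⟩
    · show g₁.toAdd (g₂.toAdd (c • v)) = σ₁ (σ₂ c) • g₁.toAdd (g₂.toAdd v)
      rw [h₂, h₁]
    · show u ∈ U ↔ g₁.toAdd (g₂.toAdd u) ∈ U
      rw [hU₂ u, hU₁ (g₂.toAdd u)]
  inv_mem' := by
    rintro g ⟨⟨σ, hσ⟩, hU⟩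
    refine ⟨⟨σ.symm, fun c v => ?_⟩, fun u => ?_⟩
    · apply g.toAdd.injective
      show g.toAdd (g.toAdd.symm (c • v)) = g.toAdd (σ.symm c • g.toAdd.symm v)
      rw [g.toAdd.apply_symm_apply, hσ, g.toAdd.apply_symm_apply, RingEquiv.apply_symm_apply]
    · show u ∈ U ↔ g.toAdd.symm u ∈ U
      rw [hU (g.toAdd.symm u), g.toAdd.apply_symm_apply]

theorem s11_lin {K : Type} [Field K] [Fintype K] (q : ℕ) (hq : 2 ≤ q)
    (hK : Fintype.card K = q ^ 5) (c0 c1 c2 c3 c4 : K)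
    (h : ∀ x : K, c0 * x + c1 * x ^ q + c2 * x ^ q ^ 2 + c3 * x ^ q ^ 3 + c4 * x ^ q ^ 4 = 0) :
    c0 = 0 ∧ c1 = 0 ∧ c2 = 0 ∧ c3 = 0 ∧ c4 = 0 := by
  classical
  let P : Polynomial K := Polynomial.C c0 * Polynomial.X ^ q ^ 0 +
    Polynomial.C c1 * Polynomial.X ^ q ^ 1 +
    Polynomial.C c2 * Polynomial.X ^ q ^ 2 + Polynomial.C c3 * Polynomial.X ^ q ^ 3 +
    Polynomial.C c4 * Polynomial.X ^ q ^ 4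
  have hle : ∀ i, i ≤ 4 → q ^ i ≤ q ^ 4 := fun i hi => Nat.pow_le_pow_right (by omega) hi
  have hmon : ∀ (c : K) (i : ℕ), i ≤ 4 →
      (Polynomial.C c * Polynomial.X ^ q ^ i).natDegree ≤ q ^ 4 := fun c i hi =>
    (Polynomial.natDegree_C_mul_X_pow_le c _).trans (hle i hi)
  have hdeg : P.natDegree ≤ q ^ 4 := by
    refine Polynomial.natDegree_add_le_of_degree_le (Polynomial.natDegree_add_le_of_degree_le
      (Polynomial.natDegree_add_le_of_degree_le (Polynomial.natDegree_add_le_of_degree_le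
      (hmon _ _ (by norm_num)) (hmon _ _ (by norm_num))) (hmon _ _ (by norm_num)))
      (hmon _ _ (by norm_num))) (hmon _ _ (by norm_num))
  have hP : P = 0 := by
    apply Polynomial.eq_zero_of_natDegree_lt_card_of_eval_eq_zero P Function.injective_id
    · intro x
      have := h x
      simpa [P] using this
    · rw [hK]
      exact lt_of_le_of_lt hdeg (Nat.pow_lt_pow_right (by omega) (by norm_num))
  have hinj : ∀ i j : ℕ, q ^ i = q ^ j ↔ i = j := fun i j =>
    (Nat.pow_right_injective hq).eq_iff
  have hc : ∀ i : ℕ, P.coeff (q ^ i) = 0 := by intro i; rw [hP]; simp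
  have e0 := hc 0
  have e1 := hc 1
  have e2 := hc 2
  have e3 := hc 3
  have e4 := hc 4
  simp only [P, Polynomial.coeff_add, Polynomial.coeff_C_mul, Polynomial.coeff_X_pow, hinj] at e0 e1 e2 e3 e4
  norm_num at e0 e1 e2 e3 e4
  exact ⟨e0, e1, e2, e3, e4⟩

/-- the linear system when the automorphism fixes w -/
theorem s11_same {K : Type} [Field K] (h2 : (2 : K) = 0) (T : K →+* K)
    (hT5 : ∀ x, T (T (T (T (T x)))) = x) (w : K) (hTw : T w = w) (hw2 : w ^ 2 = w + 1)
    (a b c d : K)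
    (k0 : a + b + w * T b + w * T (T (T (T b))) = c + d)
    (k1 : w * T a + w * b + w * T b + w * w * T (T (T b)) = d * w)
    (k2 : w * w * T b + w * T (T (T b)) + w * T (T (T (T b))) = 0)
    (k3 : w * T (T (T a)) + w * b + w * T (T (T b)) + T (T (T (T b))) = d * w) :
    c = 0 ∧ d = a ∧ T a = a ∧ T (T b) + (w + 1) * T b + b = 0 := by
  have hw0 : w ≠ 0 := by rintro rfl; simp at hw2
  have hneg : ∀ x : K, -x = x := fun x => by linear_combination (-x) * h2
  have j2 : T (T (T (T b))) = w * T b + T (T (T b)) := by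
    apply mul_left_cancel₀ hw0
    linear_combination k2 - (w * w * T b + w * T (T (T b))) * h2
  have e3 : w * T (T (T b)) = T b + b := by
    have := congrArg T (congrArg T j2)
    simp only [map_add, map_mul, hTw, hT5] at this
    grind
  have e : T (T (T b) + (w + 1) * T b + b) = (w + 1) * (T (T b) + (w + 1) * T b + b) := by
    simp only [map_add, map_mul, hTw, map_one]
    grind
  have hz : T (T b) + (w + 1) * T b + b = 0 := by
    set z := T (T b) + (w + 1) * T b + b with hz
    have h5 := hT5 z
    simp only [e, map_mul, map_add, hTw, map_one] at h5
    grind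
  have ha1 : T a = d := by
    apply mul_left_cancel₀ hw0
    grind
  have ha3 : T (T (T a)) = d := by
    apply mul_left_cancel₀ hw0
    grind
  have ha : T a = a := by
    have h3 : T (T (T a)) = T a := by rw [ha3, ha1]
    have h4 := congrArg T (congrArg T h3)
    rw [hT5, h3] at h4
    exact h4.symm
  refine ⟨?_, ?_, ha, hz⟩
  · grind
  · rw [← ha1, ha]

theorem s11_diff {K : Type} [Field K] (h2 : (2 : K) = 0) (T : K →+* K)
    (hT5 : ∀ x, T (T (T (T (T x)))) = x) (w w' : K) (hTw : T w = w) (hw2 : w ^ 2 = w + 1)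
    (hw' : w' = w + 1)
    (a b c d : K)
    (k0 : a + b + w * T b + w' * T (T (T (T b))) = c + d)
    (k1 : w * T a + w' * b + w * T b + w * w' * T (T (T b)) = d * w')
    (k2 : w * w' * T b + w * T (T (T b)) + w' * T (T (T (T b))) = 0)
    (k3 : w * T (T (T a)) + w' * b + w * T (T (T b)) + T (T (T (T b))) = d * w')
    (k4 : T (T (T (T a))) + b + w * w' * T b + w * w' * T (T (T b)) + T (T (T (T b))) = d) :
    a * d - b * c = 0 := by
  have hw0 : w ≠ 0 := by rintro rfl; simp at hw2
  subst hw'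
  have m0 : T b + w * T (T (T b)) + (w + 1) * T (T (T (T b))) = 0 := by grind
  have m1 := congrArg T m0
  have m2 := congrArg T m1
  have m3 := congrArg T m2
  have m4 := congrArg T m3
  simp only [map_add, map_mul, hTw, hT5, map_one, map_zero] at m1 m2 m3 m4
  have hb : T b = b := by grind
  simp only [hb] at *
  have ha1 : T a = w * d := by
    apply mul_left_cancel₀ hw0
    grind
  have ha3 : T (T (T a)) = w * d := by
    apply mul_left_cancel₀ hw0
    grind
  have ha : T a = a := by
    have h3 : T (T (T a)) = T a := by rw [ha3, ha1]
    have h4 := congrArg T (congrArg T h3)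
    rw [hT5, h3] at h4
    exact h4.symm
  simp only [ha] at *
  grind

/-- converse direction -/
theorem s11_conv {K : Type} [Field K] (h2 : (2 : K) = 0) (T : K →+* K)
    (w : K) (hTw : T w = w) (hw2 : w ^ 2 = w + 1)
    (a b x : K) (ha : T a = a) (hT5 : T (T (T (T (T x)))) = x)
    (hb : T (T b) + (w + 1) * T b + b = 0) (f : K → K)
    (hf : ∀ x, f x = T (T (T (T x))) + w * T (T (T x)) + w * T x + x) :
    f (a * x + b * f x) = a * f x := by
  have b2 : T (T b) = (w + 1) * T b + b := by grind
  have b3 : T (T (T b)) = (w + 1) * T (T b) + T b := by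
    have := congrArg T b2
    simpa [hTw] using this
  have b4 : T (T (T (T b))) = (w + 1) * T (T (T b)) + T (T b) := by
    have := congrArg T b3
    simpa [hTw] using this
  simp only [hf, map_add, map_mul, hTw, ha, hT5]
  rw [b4, b3, b2]
  grind

theorem s11_char {s q : ℕ} (hs : 1 ≤ s) (hq : q = 2 ^ (2 * s))
    (K : Type) [Field K] [Fintype K] (hK : Fintype.card K = q ^ 5) : CharP K 2 := by
  have : Fact (Nat.Prime 2) := ⟨Nat.prime_two⟩
  have h : Fintype.card K = 2 ^ (2 * s * 5) := by rw [hK, hq, ← pow_mul]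
  exact charP_of_card_eq_prime_pow h

theorem s11_aut {K : Type} [Field K] [Fintype K] [CharP K 2] (σ : K ≃+* K) :
    ∃ n : ℕ, ∀ x, σ x = x ^ 2 ^ n := by
  have : Fact (Nat.Prime 2) := ⟨Nat.prime_two⟩
  let : Algebra (ZMod 2) K := ZMod.algebra K 2
  let τ : K ≃ₐ[ZMod 2] K := AlgEquiv.ofRingEquiv (f := σ) (fun r => by
    have : ((σ : K →+* K).comp (algebraMap (ZMod 2) K)) = algebraMap (ZMod 2) K :=
      Subsingleton.elim _ _
    exact congrArg (fun g => g r) this)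
  obtain ⟨n, hn⟩ := (FiniteField.bijective_frobeniusAlgEquivOfAlgebraic_pow (ZMod 2) K).2 τ
  refine ⟨n, fun x => ?_⟩
  have h1 : σ x = τ x := rfl
  rw [h1, ← hn]
  have := FiniteField.coe_frobeniusAlgEquivOfAlgebraic_iterate (ZMod 2) K n
  simp only [AlgEquiv.coe_pow, this, ZMod.card]

theorem s11_pow_w {K : Type} [Field K] (h2 : (2 : K) = 0) (w : K) (hw2 : w ^ 2 = w + 1)
    (j : ℕ) : w ^ 4 ^ j = w := by
  have h4 : w ^ 4 = w := by grind
  induction j with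
  | zero => simp
  | succ j ih => rw [pow_succ, pow_mul, ih, h4]

/-- the even Frobenius powers are those fixing `w`. -/
theorem s11_even {K : Type} [Field K] [Fintype K] [CharP K 2] (w : K) (hw2 : w ^ 2 = w + 1)
    (σ : K ≃+* K) :
    (∃ j : ℕ, ∀ x, σ x = x ^ 4 ^ j) ↔ σ w = w := by
  have h2 : (2 : K) = 0 := CharTwo.two_eq_zero
  constructor
  · rintro ⟨j, hj⟩
    rw [hj, s11_pow_w h2 w hw2]
  · intro h
    obtain ⟨n, hn⟩ := s11_aut σ
    obtain ⟨j, rfl | rfl⟩ := Nat.even_or_odd' n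
    · exact ⟨j, fun x => by rw [hn, pow_mul]; norm_num⟩
    · exfalso
      rw [hn, pow_succ, pow_mul, pow_mul] at h
      norm_num at h
      rw [s11_pow_w h2 w hw2] at h
      grind

theorem s11_image {K : Type} [Field K] [Fintype K] (f : K → K) (U : Set (K × K))
    (hU : U = {u : K × K | ∃ x : K, u = (x, f x)}) (a b c d : K) (σ : K ≃+* K)
    (hdet : a * d - b * c ≠ 0) :
    ((fun v : K × K => (a * σ v.1 + b * σ v.2, c * σ v.1 + d * σ v.2)) '' U = U ↔
      ∀ x, f (a * σ x + b * σ (f x)) = c * σ x + d * σ (f x)) := by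
  set g : K × K → K × K := fun v => (a * σ v.1 + b * σ v.2, c * σ v.1 + d * σ v.2) with hg
  have hinj : Function.Injective g := by
    rintro ⟨x, y⟩ ⟨x', y'⟩ h
    simp only [hg, Prod.mk.injEq] at h
    obtain ⟨e1, e2⟩ := h
    have hx : (a * d - b * c) * (σ x - σ x') = 0 := by linear_combination d * e1 - b * e2
    have hy : (a * d - b * c) * (σ y - σ y') = 0 := by linear_combination a * e2 - c * e1
    have hx' := (mul_eq_zero.1 hx).resolve_left hdet
    have hy' := (mul_eq_zero.1 hy).resolve_left hdet
    rw [sub_eq_zero] at hx' hy'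
    rw [σ.injective hx', σ.injective hy']
  have hmem : ∀ u : K × K, u ∈ U ↔ f u.1 = u.2 := by
    rintro ⟨x, y⟩
    rw [hU]
    constructor
    · rintro ⟨z, hz⟩
      simp only [Prod.mk.injEq] at hz
      rw [hz.1, hz.2]
    · intro h
      exact ⟨x, congrArg (Prod.mk x) h.symm⟩
  constructor
  · intro h x
    have h1 : g (x, f x) ∈ U := by
      rw [← h]
      exact ⟨(x, f x), (hmem _).2 rfl, rfl⟩
    exact (hmem _).1 h1
  · intro h
    apply Set.eq_of_subset_of_ncard_le
    · rintro _ ⟨u, hu, rfl⟩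
      rw [hmem] at hu ⊢
      have := h u.1
      rw [hu] at this
      exact this
    · rw [Set.ncard_image_of_injective _ hinj]
    · exact Set.toFinite _

theorem s11_main {s q : ℕ} (hs : 1 ≤ s) (hq : q = 2 ^ (2 * s))
    {K : Type} [Field K] [Fintype K] (hK : Fintype.card K = q ^ 5)
    (w : K) (hw : w ^ q = w) (hw2 : w ^ 2 = w + 1)
    (fw : K → K) (hfw : fw = fun x => x ^ q ^ 4 + w * x ^ q ^ 3 + w * x ^ q + x)
    (U : Set (K × K)) (hU : U = {u : K × K | ∃ x : K, u = (x, fw x)})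
    (a b c d : K) (σ : K ≃+* K) (hdet : a * d - b * c ≠ 0) :
      ((fun v : K × K => (a * σ v.1 + b * σ v.2, c * σ v.1 + d * σ v.2)) '' U = U ↔
        (c = 0 ∧ d = a ∧ a ≠ 0 ∧ a ^ q = a ∧
          b ^ q ^ 2 + (w + 1) * b ^ q + b = 0 ∧ ∃ j : ℕ, ∀ x : K, σ x = x ^ 4 ^ j)) := by
  have : CharP K 2 := s11_char hs hq K hK
  have h2 : (2 : K) = 0 := CharTwo.two_eq_zero
  have hq2 : 2 ≤ q := by
    rw [hq]
    exact (pow_le_pow_right₀ (by norm_num) (by omega : 1 ≤ 2 * s) : 2 ^ 1 ≤ 2 ^ (2 * s))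
  rw [s11_image fw U hU a b c d σ hdet, s11_even w hw2 σ]
  have : Fact (Nat.Prime 2) := ⟨Nat.prime_two⟩
  let T : K →+* K := iterateFrobenius K 2 (2 * s)
  have hT : ∀ x, T x = x ^ q := fun x => by simp [T, iterateFrobenius_def, hq]
  have hT2 : ∀ x, T (T x) = x ^ q ^ 2 := fun x => by rw [hT, hT, ← pow_mul, ← pow_two]
  have hT3 : ∀ x, T (T (T x)) = x ^ q ^ 3 := fun x => by
    rw [hT2, hT, ← pow_mul]; congr 1; ring
  have hT4 : ∀ x, T (T (T (T x))) = x ^ q ^ 4 := fun x => by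
    rw [hT3, hT, ← pow_mul]; congr 1; ring
  have hT5 : ∀ x, T (T (T (T (T x)))) = x := fun x => by
    rw [hT4, hT, ← pow_mul]
    conv_rhs => rw [← FiniteField.pow_card x, hK]
    congr 1; ring
  have hTw : T w = w := by rw [hT, hw]
  have hf : ∀ x, fw x = T (T (T (T x))) + w * T (T (T x)) + w * T x + x := fun x => by
    rw [hfw, hT4, hT3, hT]
  rw [← hT2 b, ← hT b, ← hT a]
  have hσT : ∀ x, σ (T x) = T (σ x) := fun x => by rw [hT, hT, map_pow]
  have hσf : ∀ x, σ (fw x) = T (T (T (T (σ x)))) + σ w * T (T (T (σ x))) + σ w * T (σ x) + σ x :=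
    fun x => by rw [hf]; simp only [map_add, map_mul, hσT]
  have hTσw : T (σ w) = σ w := by rw [← hσT, hTw]
  constructor
  · intro h
    have key := s11_lin q hq2 hK
      (a + b + w * T b + σ w * T (T (T (T b))) - (c + d))
      (w * T a + σ w * b + w * T b + w * σ w * T (T (T b)) - d * σ w)
      (w * σ w * T b + w * T (T (T b)) + σ w * T (T (T (T b))))
      (w * T (T (T a)) + σ w * b + w * T (T (T b)) + T (T (T (T b))) - d * σ w)
      (T (T (T (T a))) + b + w * σ w * T b + w * σ w * T (T (T b)) + T (T (T (T b))) - d) (by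
        intro y
        obtain ⟨x, rfl⟩ := σ.surjective y
        have hx := h x
        rw [hf, hσf] at hx
        simp only [map_add, map_mul, hTσw, hT5] at hx
        rw [← hT4, ← hT3, ← hT2, ← hT]
        linear_combination hx)
    obtain ⟨k0, k1, k2, k3, k4⟩ := key
    rw [sub_eq_zero] at k0 k1 k3 k4
    have hsw : σ w = w ∨ σ w = w + 1 := by
      have : (σ w) ^ 2 = σ w + 1 := by rw [← map_pow, hw2, map_add, map_one]
      have h3 : (σ w - w) * (σ w - (w + 1)) = 0 := by grind
      rcases mul_eq_zero.1 h3 with h | h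
      · left; exact sub_eq_zero.1 h
      · right; exact sub_eq_zero.1 h
    rcases hsw with hsw | hsw
    · rw [hsw] at k0 k1 k2 k3
      obtain ⟨r1, r2, r3, r4⟩ := s11_same h2 T hT5 w hTw hw2 a b c d k0 k1 k2 k3
      refine ⟨r1, r2, ?_, r3, r4, hsw⟩
      rintro rfl
      apply hdet
      rw [r1]; ring
    · exact absurd (s11_diff h2 T hT5 w (σ w) hTw hw2 hsw a b c d k0 k1 k2 k3 k4) hdet
  · rintro ⟨rfl, rfl, ha0, ha, hb, hσ⟩ x
    have : σ (fw x) = fw (σ x) := by rw [hσf, hf, hσ]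
    rw [this, s11_conv h2 T w hTw hw2 d b (σ x) ha (hT5 _) hb fw hf]
    ring

theorem s11_group {G E : Type} [Group G] [Group E] (ι : E →* G) (hι : Function.Injective ι)
    (h : G) (N : Subgroup G) (hNn : N.Normal) (hN : ι.range = N)
    (hcov : ∀ g, ∃ j : ℕ, g * (h ^ j)⁻¹ ∈ N) (hdisj : ∀ j : ℕ, h ^ j ∈ N → h ^ j = 1)
    (n : ℕ) (hn : 0 < n) (hord : orderOf h = n) :
    ∃ φ : Multiplicative (ZMod n) →* MulAut E,
      Nonempty (G ≃* SemidirectProduct E (Multiplicative (ZMod n)) φ) := by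
  have hfin : IsOfFinOrder h := by rw [← orderOf_pos_iff]; omega
  have hcompl : N.IsComplement' (Subgroup.zpowers h) := by
    apply Subgroup.isComplement'_of_disjoint_and_mul_eq_univ
    · rw [Subgroup.disjoint_def]
      intro x hx hx'
      rw [← hfin.mem_powers_iff_mem_zpowers] at hx'
      obtain ⟨j, rfl⟩ := hx'
      exact hdisj j hx
    · rw [Set.eq_univ_iff_forall]
      intro g
      obtain ⟨j, hj⟩ := hcov g
      exact ⟨_, hj, h ^ j, Subgroup.npow_mem_zpowers h j, by simp⟩
  have eN : N ≃* E := ((MonoidHom.ofInjective hι).trans (MulEquiv.subgroupCongr hN)).symm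
  have eZ : Subgroup.zpowers h ≃* Multiplicative (ZMod n) := by
    have : Nat.card (Subgroup.zpowers h) = n := by rw [Nat.card_zpowers, hord]
    have e := zmodCyclicMulEquiv (inferInstance : IsCyclic (Subgroup.zpowers h))
    rw [this] at e
    exact e.symm
  exact ⟨_, ⟨(SemidirectProduct.mulEquivSubgroup hcompl).symm.trans
    (SemidirectProduct.congr' eN eZ)⟩⟩

theorem s11_elem {A : Type} [AddCommGroup A] [Finite A] (h : ∀ x : A, 2 • x = 0) (n : ℕ)
    (hc : Nat.card A = 2 ^ n) : Nonempty (A ≃+ (Fin n → ZMod 2)) := by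
  have : Fact (Nat.Prime 2) := ⟨Nat.prime_two⟩
  let : Module (ZMod 2) A := AddCommGroup.zmodModule h
  have hr : Module.finrank (ZMod 2) A = n := by
    have := Module.natCard_eq_pow_finrank (K := ZMod 2) (V := A)
    rw [hc, Nat.card_zmod] at this
    exact (Nat.pow_right_injective le_rfl this).symm
  have he : Module.finrank (ZMod 2) A = Module.finrank (ZMod 2) (Fin n → ZMod 2) := by
    rw [hr, Module.finrank_fin_fun]
  exact ⟨(LinearEquiv.ofFinrankEq A (Fin n → ZMod 2) he).toAddEquiv⟩

theorem s11_roots {K : Type} [Field K] [Fintype K] (q : ℕ) (hq : 2 ≤ q)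
    (hK : Fintype.card K = q ^ 5) :
    Nonempty (Multiplicative (ZMod (q - 1)) ≃* rootsOfUnity (q - 1) K) := by
  have : NeZero (q - 1) := ⟨by omega⟩
  obtain ⟨g, hg⟩ := IsCyclic.exists_ofOrder_eq_natCard (α := Kˣ)
  have hc : Nat.card Kˣ = q ^ 5 - 1 := by
    classical
    rw [Nat.card_eq_fintype_card, Fintype.card_units, hK]
  obtain ⟨m, hm⟩ : q - 1 ∣ q ^ 5 - 1 := by
    simpa using Nat.sub_dvd_pow_sub_pow q 1 5
  have hpos : 0 < q ^ 5 - 1 := by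
    have : 2 ^ 5 ≤ q ^ 5 := Nat.pow_le_pow_left hq 5
    omega
  have hprim : IsPrimitiveRoot (g ^ m) (q - 1) := by
    have h1 : IsPrimitiveRoot g (q ^ 5 - 1) := by rw [← hc, ← hg]; exact IsPrimitiveRoot.orderOf g
    exact h1.pow hpos (by rw [hm, mul_comm])
  have hcard := hprim.card_rootsOfUnity'
  have hcard' : Nat.card (rootsOfUnity (q - 1) K) = q - 1 := hcard
  have hcyc : IsCyclic (rootsOfUnity (q - 1) K) := inferInstance
  have := zmodCyclicMulEquiv hcyc
  rw [hcard'] at this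
  exact ⟨this⟩

theorem s11_kercard {K : Type} [Field K] [Fintype K] (q : ℕ) (hq : 2 ≤ q) (b c d : K) 
    (P : K →+ K) (n : ℕ)
    (hP : ∀ x, P x = 0 → x ^ q ^ n + b * x ^ q ^ 2 + c * x ^ q + d * x = 0) (hn : n = 3 ∨ n = 2 ∧ b = 0) :
    Nat.card P.ker ≤ q ^ n := by
  classical
  let F : Polynomial K := Polynomial.X ^ q ^ n + (Polynomial.C b * Polynomial.X ^ q ^ 2 +
    Polynomial.C c * Polynomial.X ^ q ^ 1 + Polynomial.C d * Polynomial.X ^ q ^ 0)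
  have hdeg : (Polynomial.C b * Polynomial.X ^ q ^ 2 +
    Polynomial.C c * Polynomial.X ^ q ^ 1 + Polynomial.C d * Polynomial.X ^ q ^ 0).natDegree < q ^ n := by
    have hlt : ∀ i, i < n → q ^ i < q ^ n := fun i hi => Nat.pow_lt_pow_right (by omega) hi
    have h0 : 0 < q ^ n := by positivity
    have hb : (Polynomial.C b * Polynomial.X ^ q ^ 2).natDegree < q ^ n := by
      rcases hn with rfl | ⟨rfl, rfl⟩
      · exact (Polynomial.natDegree_C_mul_X_pow_le b _).trans_lt (hlt _ (by norm_num))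
      · simpa using h0
    have hc := (Polynomial.natDegree_C_mul_X_pow_le c (q ^ 1)).trans_lt (hlt 1 (by omega))
    have hd := (Polynomial.natDegree_C_mul_X_pow_le d (q ^ 0)).trans_lt (hlt 0 (by omega))
    refine (Polynomial.natDegree_add_le _ _).trans_lt (max_lt
      ((Polynomial.natDegree_add_le _ _).trans_lt (max_lt hb hc)) hd)
  have hF : F.natDegree = q ^ n := by
    rw [Polynomial.natDegree_add_eq_left_of_natDegree_lt] <;> rw [Polynomial.natDegree_X_pow]
    exact hdeg
  have hF0 : F ≠ 0 := by
    intro h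
    rw [h] at hF
    have h0 : 0 < q ^ n := by positivity
    simp at hF
    omega
  have hsub : (P.ker : Set K) ⊆ (F.roots.toFinset : Set K) := by
    intro x hx
    have := hP x hx
    simp only [Finset.mem_coe, Multiset.mem_toFinset, Polynomial.mem_roots hF0, Polynomial.IsRoot]
    simp [F, ← this]
    ring
  calc Nat.card P.ker = (P.ker : Set K).ncard := rfl
    _ ≤ (F.roots.toFinset : Set K).ncard := Set.ncard_le_ncard hsub (Set.toFinite _)
    _ = F.roots.toFinset.card := Set.ncard_coe_finset _
    _ ≤ F.roots.card := Multiset.toFinset_card_le _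
    _ ≤ q ^ n := hF ▸ F.card_roots'

theorem s11_Bcard {s q : ℕ} (hs : 1 ≤ s) (hq : q = 2 ^ (2 * s))
    {K : Type} [Field K] [Fintype K] (hK : Fintype.card K = q ^ 5)
    (w : K) (hw : w ^ q = w) (hw2 : w ^ 2 = w + 1) (B : AddSubgroup K)
    (hB : ∀ b, b ∈ B ↔ b ^ q ^ 2 + (w + 1) * b ^ q + b = 0) :
    Nat.card B = 2 ^ (4 * s) := by
  have : CharP K 2 := s11_char hs hq K hK
  have h2 : (2 : K) = 0 := CharTwo.two_eq_zero
  have hq2 : 2 ≤ q := by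
    rw [hq]
    exact (pow_le_pow_right₀ (by norm_num) (by omega : 1 ≤ 2 * s) : 2 ^ 1 ≤ 2 ^ (2 * s))
  have : Fact (Nat.Prime 2) := ⟨Nat.prime_two⟩
  let T : K →+* K := iterateFrobenius K 2 (2 * s)
  have hT : ∀ x, T x = x ^ q := fun x => by simp [T, iterateFrobenius_def, hq]
  have hT2 : ∀ x, T (T x) = x ^ q ^ 2 := fun x => by rw [hT, hT, ← pow_mul, ← pow_two]
  have hT3 : ∀ x, T (T (T x)) = x ^ q ^ 3 := fun x => by
    rw [hT2, hT, ← pow_mul]; congr 1; ring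
  have hT5 : ∀ x, T (T (T (T (T x)))) = x := fun x => by
    rw [hT3, hT2, ← pow_mul]
    conv_rhs => rw [← FiniteField.pow_card x, hK]
    congr 1; ring
  have hTw : T w = w := by rw [hT, hw]
  let P : K →+ K := AddMonoidHom.mk' (fun x => T (T x) + (w + 1) * T x + x) (by
    intro x y; simp only [map_add]; ring)
  let Q : K →+ K := AddMonoidHom.mk'
    (fun x => T (T (T x)) + (w + 1) * T (T x) + (w + 1) * T x + x) (by
    intro x y; simp only [map_add]; ring)
  have hPB : P.ker = B := by
    ext x
    rw [hB, ← hT2, ← hT]; rfl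
  have hPc : Nat.card P.ker ≤ q ^ 2 := by
    apply s11_kercard q hq2 0 (w + 1) 1 P 2 _ (by simp)
    intro x hx
    rw [← hT2, ← hT]
    have : T (T x) + (w + 1) * T x + x = 0 := hx
    linear_combination this
  have hQc : Nat.card Q.ker ≤ q ^ 3 := by
    apply s11_kercard q hq2 (w + 1) (w + 1) 1 Q 3 _ (by simp)
    intro x hx
    rw [← hT3, ← hT2, ← hT]
    have : T (T (T x)) + (w + 1) * T (T x) + (w + 1) * T x + x = 0 := hx
    linear_combination this
  have hle : Q.range ≤ P.ker := by
    rintro _ ⟨x, rfl⟩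
    change T (T (T (T (T x)) + (w + 1) * T (T x) + (w + 1) * T x + x)) + (w + 1) *
      T (T (T (T x)) + (w + 1) * T (T x) + (w + 1) * T x + x) +
      (T (T (T x)) + (w + 1) * T (T x) + (w + 1) * T x + x) = 0
    simp only [map_add, map_mul, hTw, map_one, hT5]
    grind
  have hcard : Nat.card Q.ker * Nat.card Q.range = q ^ 5 := by
    rw [← hK, ← Nat.card_eq_fintype_card, ← AddSubgroup.index_ker, AddSubgroup.card_mul_index]
  have hle' : Nat.card Q.range ≤ Nat.card P.ker :=
    Nat.card_le_card_of_injective _ (AddSubgroup.inclusion_injective hle)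
  have hge : q ^ 2 ≤ Nat.card P.ker := by
    have h1 : q ^ 3 * q ^ 2 ≤ q ^ 3 * Nat.card P.ker := by
      calc q ^ 3 * q ^ 2 = q ^ 5 := by ring
        _ = _ := hcard.symm
        _ ≤ _ := Nat.mul_le_mul hQc hle'
    exact Nat.le_of_mul_le_mul_left h1 (by positivity)
  rw [← hPB, le_antisymm hPc hge, hq, ← pow_mul]
  congr 1; ring

/-- the linear map `(x, y) ↦ (a x + a b y, a y)` -/
def s11_shear {K : Type} [Field K] (a : Kˣ) (b : K) : AddAut (K × K) where
  toFun v := (a * v.1 + a * b * v.2, a * v.2)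
  invFun v := ((a⁻¹ : Kˣ) * v.1 - b * (a⁻¹ : Kˣ) * v.2, (a⁻¹ : Kˣ) * v.2)
  left_inv v := by
    ext
    · simp; field_simp; ring
    · simp
  right_inv v := by
    ext
    · simp; field_simp; ring
    · simp
  map_add' u v := by
    ext
    · simp; ring
    · simp; ring

/-- coordinatewise application of a field automorphism -/
def s11_coord {K : Type} [Field K] (σ : K ≃+* K) : AddAut (K × K) where
  toFun v := (σ v.1, σ v.2)
  invFun v := (σ.symm v.1, σ.symm v.2)
  left_inv v := by simp
  right_inv v := by simp
  map_add' u v := by simp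

theorem s11_semilin_form {K : Type} [Field K] (g : AddAut (K × K)) (σ : K ≃+* K)
    (hσ : ∀ (c : K) (v : K × K), g (c • v) = σ c • g v) :
    ∃ a b c d : K, a * d - b * c ≠ 0 ∧
      ∀ v : K × K, g v = (a * σ v.1 + b * σ v.2, c * σ v.1 + d * σ v.2) := by
  have hform : ∀ v : K × K, g v = ((g (1, 0)).1 * σ v.1 + (g (0, 1)).1 * σ v.2,
      (g (1, 0)).2 * σ v.1 + (g (0, 1)).2 * σ v.2) := by
    intro v
    have hv : v = v.1 • ((1, 0) : K × K) + v.2 • ((0, 1) : K × K) := by ext <;> simp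
    conv_lhs => rw [hv, map_add, hσ, hσ]
    ext <;> simp <;> ring
  refine ⟨_, _, _, _, ?_, hform⟩
  generalize (g (1, 0)).1 = a at *
  generalize (g (0, 1)).1 = b at *
  generalize (g (1, 0)).2 = c at *
  generalize (g (0, 1)).2 = d at *
  intro hdet
  have hz : ∀ v : K × K, g v = 0 → v = 0 := fun v hv => by
    apply g.injective; rw [hv, map_zero]
  have h1 := hz (σ.symm d, -σ.symm c) (by
    rw [hform]; ext
    · simp; linear_combination hdet
    · simp; ring)
  have h2 := hz (-σ.symm b, σ.symm a) (by
    rw [hform]; ext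
    · simp; ring
    · simp; linear_combination hdet)
  simp only [Prod.mk_eq_zero, neg_eq_zero, EmbeddingLike.map_eq_zero_iff] at h1 h2
  have h3 := hz (1, 0) (by rw [hform]; simp [h1, h2])
  simp at h3

theorem s11_image_iff {K : Type} [Fintype K] (g : K × K → K × K) (hg : Function.Injective g)
    (U : Set (K × K)) :
    g '' U = U ↔ ∀ u, u ∈ U ↔ g u ∈ U := by
  constructor
  · intro h u
    conv_rhs => rw [← h]
    exact (hg.mem_set_image).symm
  · intro h
    apply Set.eq_of_subset_of_ncard_le
    · rintro _ ⟨u, hu, rfl⟩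
      exact (h u).1 hu
    · rw [Set.ncard_image_of_injective _ hg]
    · exact Set.toFinite _

theorem s11_second {s q : ℕ} (hs : 1 ≤ s) (hq : q = 2 ^ (2 * s))
    {K : Type} [Field K] [Fintype K] (hK : Fintype.card K = q ^ 5)
    (w : K) (hw : w ^ q = w) (hw2 : w ^ 2 = w + 1)
    (U : Set (K × K))
    (main : ∀ (a b c d : K) (σ : K ≃+* K), a * d - b * c ≠ 0 →
      ((fun v : K × K => (a * σ v.1 + b * σ v.2, c * σ v.1 + d * σ v.2)) '' U = U ↔
        (c = 0 ∧ d = a ∧ a ≠ 0 ∧ a ^ q = a ∧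
          b ^ q ^ 2 + (w + 1) * b ^ q + b = 0 ∧ ∃ j : ℕ, ∀ x : K, σ x = x ^ 4 ^ j))) :
    ∃ φ : Multiplicative (ZMod (5 * s)) →*
        MulAut (Multiplicative (Fin (4 * s) → ZMod 2) × Multiplicative (ZMod (q - 1))),
      Nonempty ((semilinearStab K U) ≃*
        SemidirectProduct
          (Multiplicative (Fin (4 * s) → ZMod 2) × Multiplicative (ZMod (q - 1)))
          (Multiplicative (ZMod (5 * s))) φ) := by
  have : CharP K 2 := s11_char hs hq K hK
  have h2 : (2 : K) = 0 := CharTwo.two_eq_zero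
  have hq2 : 2 ≤ q := by
    rw [hq]
    exact (pow_le_pow_right₀ (by norm_num) (by omega : 1 ≤ 2 * s) : 2 ^ 1 ≤ 2 ^ (2 * s))
  have : Fact (Nat.Prime 2) := ⟨Nat.prime_two⟩
  have hqadd : ∀ x y : K, (x + y) ^ q = x ^ q + y ^ q := fun x y => by
    rw [hq]; exact add_pow_char_pow x y 2 _
  have hq2add : ∀ x y : K, (x + y) ^ q ^ 2 = x ^ q ^ 2 + y ^ q ^ 2 := fun x y => by
    rw [pow_two, pow_mul, pow_mul, pow_mul, hqadd, hqadd]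
  -- the elementary abelian part
  let B : AddSubgroup K :=
    { carrier := {b | b ^ q ^ 2 + (w + 1) * b ^ q + b = 0}
      zero_mem' := by
        have : q ≠ 0 := by omega
        simp [this]
      add_mem' := by
        intro x y hx hy
        simp only [Set.mem_ofPred_eq] at hx hy ⊢
        rw [hqadd, hq2add]
        linear_combination hx + hy
      neg_mem' := by
        intro x hx
        have : -x = x := CharTwo.neg_eq x
        simpa only [Set.mem_ofPred_eq, this] using hx }
  have hB : ∀ b, b ∈ B ↔ b ^ q ^ 2 + (w + 1) * b ^ q + b = 0 := fun b => Iff.rfl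
  obtain ⟨eB⟩ := s11_elem (A := B) (fun x => by
    ext; simp [two_nsmul, CharTwo.add_self_eq_zero]) (4 * s)
    (s11_Bcard hs hq hK w hw hw2 B hB)
  obtain ⟨eR⟩ := s11_roots q hq2 hK
  -- membership in the stabilizer through `main`
  have hroot : ∀ a : Kˣ, a ∈ rootsOfUnity (q - 1) K ↔ (a : K) ^ q = a := by
    intro a
    rw [mem_rootsOfUnity, Units.ext_iff]
    have : (a : K) ^ q = (a : K) ^ (q - 1) * a := by
      rw [← pow_succ]; congr 1; omega
    rw [this]
    simp
  have hBmul : ∀ a b : K, a ^ q = a → b ∈ B → a * b ∈ B := by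
    intro a b ha hb
    rw [hB] at hb ⊢
    have ha2 : a ^ q ^ 2 = a := by rw [pow_two, pow_mul, ha, ha]
    rw [mul_pow, mul_pow, ha, ha2]
    linear_combination a * hb
  let ι₀ : Multiplicative B × rootsOfUnity (q - 1) K →* semilinearStab K U :=
    { toFun := fun p => ⟨Multiplicative.ofAdd (s11_shear (p.2 : Kˣ) (p.1.toAdd : K)), by
        have ha : ((p.2 : Kˣ) : K) ^ q = (p.2 : Kˣ) := (hroot _).1 p.2.2
        have hb : (p.1.toAdd : K) ∈ B := (p.1.toAdd).2
        refine ⟨⟨RingEquiv.refl K, fun c v => ?_⟩, ?_⟩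
        · ext
          · simp [s11_shear]; ring
          · simp [s11_shear]; ring
        · refine (s11_image_iff (s11_shear (p.2 : Kˣ) (p.1.toAdd : K))
            (s11_shear (p.2 : Kˣ) (p.1.toAdd : K)).injective U).1 ?_
          have := (main (p.2 : Kˣ) ((p.2 : Kˣ) * (p.1.toAdd : K)) 0 (p.2 : Kˣ)
            (RingEquiv.refl K) (by simp)).2 ⟨rfl, rfl, by simp, ha, hBmul _ _ ha hb,
              0, fun x => by simp⟩
          convert this using 2
          ext v
          · simp [s11_shear]
          · simp [s11_shear]⟩
      map_one' := by
        apply Subtype.ext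
        apply Multiplicative.toAdd.injective
        apply AddEquiv.ext
        intro v
        change ((1 : K) * v.1 + 1 * 0 * v.2, (1 : K) * v.2) = v
        ext <;> simp
      map_mul' := by
        intro p p'
        apply Subtype.ext
        apply Multiplicative.toAdd.injective
        apply AddEquiv.ext
        intro v
        change ((((p.2 : Kˣ) : K) * ((p'.2 : Kˣ) : K)) * v.1 +
            (((p.2 : Kˣ) : K) * ((p'.2 : Kˣ) : K)) * ((p.1.toAdd : K) + (p'.1.toAdd : K)) * v.2,
            (((p.2 : Kˣ) : K) * ((p'.2 : Kˣ) : K)) * v.2) =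
          (((p.2 : Kˣ) : K) * (((p'.2 : Kˣ) : K) * v.1 +
            ((p'.2 : Kˣ) : K) * (p'.1.toAdd : K) * v.2) +
            ((p.2 : Kˣ) : K) * (p.1.toAdd : K) * (((p'.2 : Kˣ) : K) * v.2),
            ((p.2 : Kˣ) : K) * (((p'.2 : Kˣ) : K) * v.2))
        ext
        · simp only; ring
        · simp only; ring }
  have hι₀ : ∀ p v, (ι₀ p).1.toAdd v = (((p.2 : Kˣ) : K) * v.1 +
      ((p.2 : Kˣ) : K) * (p.1.toAdd : K) * v.2, ((p.2 : Kˣ) : K) * v.2) := fun p v => rfl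
  have hι₀inj : Function.Injective ι₀ := by
    intro p p' h
    have e1 := (hι₀ p (1, 0)).symm.trans ((congrArg (fun g => g.1.toAdd (1, 0)) h).trans
      (hι₀ p' (1, 0)))
    have e2 := (hι₀ p (0, 1)).symm.trans ((congrArg (fun g => g.1.toAdd (0, 1)) h).trans
      (hι₀ p' (0, 1)))
    simp only [mul_one, mul_zero, add_zero, zero_add, Prod.mk.injEq] at e1 e2
    have e3 : p.2 = p'.2 := Subtype.ext (Units.ext e1.1)
    have e4 : p.1 = p'.1 := by
      apply Multiplicative.toAdd.injective
      apply Subtype.ext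
      have := e2.1
      rw [← e1.1] at this
      exact mul_left_cancel₀ (Units.ne_zero _) this
    exact Prod.ext e4 e3
  let ι : Multiplicative (Fin (4 * s) → ZMod 2) × Multiplicative (ZMod (q - 1)) →*
      semilinearStab K U :=
    ι₀.comp (MulEquiv.prodCongr (AddEquiv.toMultiplicative eB.symm) eR).toMonoidHom
  have hι : Function.Injective ι :=
    hι₀inj.comp (MulEquiv.prodCongr (AddEquiv.toMultiplicative eB.symm) eR).injective
  have hrange : ι.range = ι₀.range := by
    ext x
    constructor
    · rintro ⟨y, rfl⟩
      exact ⟨_, rfl⟩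
    · rintro ⟨y, rfl⟩
      obtain ⟨z, rfl⟩ :=
        (MulEquiv.prodCongr (AddEquiv.toMultiplicative eB.symm) eR).surjective y
      exact ⟨z, rfl⟩
  -- the range is the subgroup of linear maps
  have hlin : ∀ g : semilinearStab K U,
      g ∈ ι₀.range ↔ ∀ (c : K) (v : K × K), g.1.toAdd (c • v) = c • g.1.toAdd v := by
    intro g
    constructor
    · rintro ⟨p, rfl⟩ c v
      rw [hι₀, hι₀]
      ext
      · simp; ring
      · simp; ring
    · intro h
      obtain ⟨a, b, c, d, hdet, hform⟩ := s11_semilin_form g.1.toAdd (RingEquiv.refl K) h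
      have himg := (s11_image_iff g.1.toAdd g.1.toAdd.injective U).2 g.2.2
      have hfun : (g.1.toAdd : K × K → K × K) = fun v : K × K =>
          (a * RingEquiv.refl K v.1 + b * RingEquiv.refl K v.2,
            c * RingEquiv.refl K v.1 + d * RingEquiv.refl K v.2) := funext hform
      rw [hfun] at himg
      obtain ⟨rfl, rfl, ha0, ha, hb, -⟩ := (main a b c d (RingEquiv.refl K) hdet).1 himg
      have hainv : (d⁻¹) ^ q = d⁻¹ := by rw [inv_pow, ha]
      refine ⟨(Multiplicative.ofAdd ⟨d⁻¹ * b, hBmul _ _ hainv hb⟩,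
        ⟨Units.mk0 d ha0, (hroot _).2 ha⟩), ?_⟩
      apply Subtype.ext
      apply Multiplicative.toAdd.injective
      apply AddEquiv.ext
      intro v
      rw [hι₀, hform]
      ext
      · simp [ha0]
      · simp
  have hnormal : ι₀.range.Normal := by
    constructor
    intro n hn g
    rw [hlin] at hn ⊢
    obtain ⟨σ, hσ⟩ := g.2.1
    intro c v
    change g.1.toAdd (n.1.toAdd (g.1.toAdd.symm (c • v))) =
      c • g.1.toAdd (n.1.toAdd (g.1.toAdd.symm v))
    have h1 : g.1.toAdd.symm (c • v) = σ.symm c • g.1.toAdd.symm v := by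
      apply g.1.toAdd.injective
      rw [hσ, AddEquiv.apply_symm_apply, AddEquiv.apply_symm_apply, RingEquiv.apply_symm_apply]
    rw [h1, hn, hσ, RingEquiv.apply_symm_apply]
  -- the Frobenius complement
  let F : K ≃+* K := iterateFrobeniusEquiv K 2 2
  have hF : ∀ x, F x = x ^ 4 := fun x => by
    simp [F, iterateFrobenius_def]
  let h : semilinearStab K U := ⟨Multiplicative.ofAdd (s11_coord F), by
    refine ⟨⟨F, fun c v => ?_⟩, ?_⟩
    · ext
      · simp [s11_coord]
      · simp [s11_coord]
    · refine (s11_image_iff (s11_coord F) (s11_coord F).injective U).1 ?_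
      have := (main 1 0 0 1 F (by simp)).2 ⟨rfl, rfl, by simp, by simp, by
        have : q ≠ 0 := by omega
        simp [this], 1, fun x => by rw [hF, pow_one]⟩
      convert this using 2
      ext v
      · simp [s11_coord]
      · simp [s11_coord]⟩
  have hh : ∀ (j : ℕ) (v : K × K), (h ^ j).1.toAdd v = (v.1 ^ 4 ^ j, v.2 ^ 4 ^ j) := by
    intro j
    induction j with
    | zero => intro v; ext <;> simp
    | succ j ih =>
      intro v
      have : (h ^ (j + 1)).1.toAdd v = (h ^ j).1.toAdd (F v.1, F v.2) := by
        rw [pow_succ]; rfl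
      rw [this, ih, hF, hF, ← pow_mul, ← pow_mul, pow_succ, mul_comm]
  have hone : ∀ j : ℕ, (∀ x : K, x ^ 4 ^ j = x) → h ^ j = 1 := by
    intro j hj
    apply Subtype.ext
    apply Multiplicative.toAdd.injective
    apply AddEquiv.ext
    intro v
    rw [hh, hj, hj]
    rfl
  have hcardK : Fintype.card K = 4 ^ (5 * s) := by
    rw [hK, hq, ← pow_mul, show (4 : ℕ) = 2 ^ 2 by norm_num, ← pow_mul]
    congr 1; ring
  have hord : orderOf h = 5 * s := by
    rw [orderOf_eq_iff (by omega)]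
    refine ⟨hone _ fun x => ?_, fun m hm hm0 hm1 => ?_⟩
    · rw [← hcardK, FiniteField.pow_card]
    · have hx : ∀ x : K, x ^ 4 ^ m = x := by
        intro x
        have := hh m (x, 0)
        rw [hm1] at this
        exact (congrArg Prod.fst this).symm
      have h1 : 1 < 4 ^ m := Nat.one_lt_pow (by omega) (by norm_num)
      have hP0 : (Polynomial.X ^ 4 ^ m - Polynomial.X : Polynomial K) = 0 := by
        apply Polynomial.eq_zero_of_natDegree_lt_card_of_eval_eq_zero _ Function.injective_id
        · intro x
          simp [hx]
        · rw [FiniteField.X_pow_card_sub_X_natDegree_eq K h1, hcardK]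
          exact Nat.pow_lt_pow_right (by norm_num) hm
      exact FiniteField.X_pow_card_sub_X_ne_zero K h1 hP0
  refine s11_group ι hι h ι₀.range hnormal hrange ?_ ?_ (5 * s) (by omega) hord
  · intro g
    obtain ⟨σ, hσ⟩ := g.2.1
    obtain ⟨a, b, c, d, hdet, hform⟩ := s11_semilin_form g.1.toAdd σ hσ
    have himg := (s11_image_iff g.1.toAdd g.1.toAdd.injective U).2 g.2.2
    have hfun : (g.1.toAdd : K × K → K × K) = fun v : K × K =>
        (a * σ v.1 + b * σ v.2, c * σ v.1 + d * σ v.2) := funext hform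
    rw [hfun] at himg
    obtain ⟨-, -, -, -, -, j, hj⟩ := (main a b c d σ hdet).1 himg
    refine ⟨j, ?_⟩
    rw [hlin]
    intro k v
    have hsymm : ∀ u, ((h ^ j)⁻¹).1.toAdd u = (h ^ j).1.toAdd.symm u := fun u => rfl
    change g.1.toAdd ((h ^ j).1.toAdd.symm (k • v)) = k • g.1.toAdd ((h ^ j).1.toAdd.symm v)
    have h1 : (h ^ j).1.toAdd.symm (k • v) = σ.symm k • (h ^ j).1.toAdd.symm v := by
      apply (h ^ j).1.toAdd.injective
      have h3 : ∀ (k : K) (u : K × K), (h ^ j).1.toAdd (k • u) = σ k • (h ^ j).1.toAdd u := by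
        intro k u
        rw [hh, hh, hj]
        ext <;> simp [mul_pow]
      rw [h3, AddEquiv.apply_symm_apply, AddEquiv.apply_symm_apply, RingEquiv.apply_symm_apply]
    rw [h1, hσ, RingEquiv.apply_symm_apply]
  · intro j hj
    rw [hlin] at hj
    apply hone
    intro x
    have := hj x (1, 0)
    rw [hh, hh] at this
    simpa using congrArg Prod.fst this

/-- description of the stabilizer of `U_{f_w}` in `ΓL(2, q^5)` for
`q = 2^{2s}`, `w² = w + 1`, `f_w(x) = x^{q^4} + w x^{q^3} + w x^q + x`.  A semilinear
map `(x, y) ↦ A·(σ x, σ y)` with `A = ((a,b),(c,d))` invertible maps `U_{f_w}` onto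
itself iff `c = 0`, `d = a ∈ F_q^*`, `b^{q²} + (w+1) b^q + b = 0` and `σ` is an even
power of the Frobenius (`σ x = x^{4^j}`).  In particular the stabilizer of `U_{f_w}` in
`ΓL(2,q^5)` is isomorphic to `(E_{q²} × C_{q−1}) ⋊ C_{5s}` for a suitable action, where
`E_{q²}` is elementary abelian of order `q² = 2^{4s}`. -/
theorem stmt_11 (s : ℕ) (hs : 1 ≤ s) (q : ℕ) (hq : q = 2 ^ (2 * s))
    (K : Type) [Field K] [Fintype K] (hK : Fintype.card K = q ^ 5)
    (w : K) (hw : w ^ q = w) (hw2 : w ^ 2 = w + 1)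
    (fw : K → K) (hfw : fw = fun x => x ^ q ^ 4 + w * x ^ q ^ 3 + w * x ^ q + x)
    (U : Set (K × K)) (hU : U = {u : K × K | ∃ x : K, u = (x, fw x)}) :
    (∀ (a b c d : K) (σ : K ≃+* K), a * d - b * c ≠ 0 →
      ((fun v : K × K => (a * σ v.1 + b * σ v.2, c * σ v.1 + d * σ v.2)) '' U = U ↔
        (c = 0 ∧ d = a ∧ a ≠ 0 ∧ a ^ q = a ∧
          b ^ q ^ 2 + (w + 1) * b ^ q + b = 0 ∧ ∃ j : ℕ, ∀ x : K, σ x = x ^ 4 ^ j))) ∧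
    ∃ φ : Multiplicative (ZMod (5 * s)) →*
        MulAut (Multiplicative (Fin (4 * s) → ZMod 2) × Multiplicative (ZMod (q - 1))),
      Nonempty ((semilinearStab K U) ≃*
        SemidirectProduct
          (Multiplicative (Fin (4 * s) → ZMod 2) × Multiplicative (ZMod (q - 1)))
          (Multiplicative (ZMod (5 * s))) φ) := by
  have main := fun (a b c d : K) (σ : K ≃+* K) (hdet : a * d - b * c ≠ 0) =>
    s11_main hs hq hK w hw hw2 fw hfw U hU a b c d σ hdet
  exact ⟨main, s11_second hs hq hK w hw hw2 U main⟩
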